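/- Let g : ℝ^n → ℝ be a convex polynomial function with g(0) = 0 and g(x) > 0 for all x ≠ 0, let A = {(x, z) ∈ ℝ^n × ℝ : z ≥ g(x)}, let a ∈ ℝ^n with a ≠ 0, and let B = {t·(a, 0) : t ∈ ℝ} ⊆ ℝ^{n+1}. Suppose the univariate polynomial t ↦ g(t a/‖a‖) has lowest-degree term c_0 t^d with c_0 > 0 and d a natural number with d ≥ 2. Let {u_k} ⊆ ℝ^{n+1} be the sequence of alternating projections u_{k+1} = P_B(P_A(u_k)) starting from some u_0, and assume u_k ≠ 0 for all k. Then u_k converges to 0 and lim_{k→∞} ((2d−2) d c_0^2)^{1/(2d−2)} · k^{1/(2d−2)} · ‖u_k‖ = 1; in particular ‖u_k‖ = Θ(k^{−1/(2d−2)}) as k → ∞. -/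

import Mathlib

open Filter

/-- `u` is the metric projection of `p` onto `S`. -/
def IsMetricProj {E : Type*} [NormedAddCommGroup E] (S : Set E) (p u : E) : Prop :=
  u ∈ S ∧ ∀ s ∈ S, ‖u - p‖ ≤ ‖s - p‖

/-!
Write `A = {f ≤ 0}` with `f (x, z) = g x - z`, and let `w` be the projection of `t • e` onto `A`,
where `‖e‖ = 1`. The Lagrange condition reads `t • e - w = r • ∇f w`, and a first-order expansion of
`f` gives `f (t • e) ~ r * ‖∇f 0‖ ^ 2`, so `r ~ c * |t| ^ p / ‖∇f 0‖ ^ 2` when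
`f (t • e) ~ c * |t| ^ p`. By convexity this asymptotic relation may be differentiated, whence
`⟪∇f w, t • e⟫ ~ p * c * |t| ^ p`. If `t' • e` is the projection of `w` onto the line, then
`t * (t - t') = r * ⟪∇f w, t • e⟫ ~ p * (c / ‖∇f 0‖) ^ 2 * |t| ^ (2 * p)`. Hence the increments of
`|t| ^ (-(2 * p - 2))` along the iteration converge to `(2 * p - 2) * p * (c / ‖∇f 0‖) ^ 2`, and
Cesàro averaging gives the rate.
-/

open Asymptotics Topology

section Sequences

theorem tendsto_abs_rpow_neg_succ_sub {t : ℕ → ℝ} {m q : ℝ} (hm : 0 < m)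
    (ht : Tendsto t atTop (𝓝 0)) (hne : ∀ k, t k ≠ 0)
    (h : Tendsto (fun k => t k * (t k - t (k + 1)) / |t k| ^ (m + 2)) atTop (𝓝 q)) :
    Tendsto (fun k => |t (k + 1)| ^ (-m) - |t k| ^ (-m)) atTop (𝓝 (q * m)) := by
  set Q : ℕ → ℝ := fun k => t k * (t k - t (k + 1)) / |t k| ^ (m + 2)
  set x : ℕ → ℝ := fun k => |t k| ^ m * Q k with hx_def
  set φ : ℝ → ℝ := fun y => (1 - y) ^ (-m)
  have hstep (k : ℕ) : t (k + 1) = t k * (1 - x k) := by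
    have hsplit : |t k| ^ (m + 2) = |t k| ^ m * t k ^ 2 := by
      rw [Real.rpow_add (abs_pos.2 (hne k)), Real.rpow_two, sq_abs]
    have := (Real.rpow_pos_of_pos (abs_pos.2 (hne k)) m).ne'
    have := hne k
    simp only [hx_def, Q, hsplit]
    field_simp
    ring
  have hx : Tendsto x atTop (𝓝 0) := by
    simpa [hm.ne'] using (ht.abs.rpow_const (Or.inr hm.le)).mul h
  have hφ : HasDerivAt φ m 0 := by
    simpa using ((hasDerivAt_id (0 : ℝ)).const_sub 1).rpow_const (p := -m) (Or.inl (by simp))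
  have hslope : Tendsto (fun k => dslope φ 0 (x k)) atTop (𝓝 m) := by
    have := (continuousAt_dslope_same.2 hφ.differentiableAt).tendsto.comp hx
    rwa [dslope_same, hφ.deriv] at this
  refine (h.mul hslope).congr' ?_
  filter_upwards [hx.eventually_lt_const one_pos] with k hk
  calc Q k * dslope φ 0 (x k)
      = |t k| ^ (-m) * (x k * dslope φ 0 (x k)) := by
        rw [hx_def, mul_assoc, ← mul_assoc (|t k| ^ (-m)), ← Real.rpow_add (abs_pos.2 (hne k)),
          neg_add_cancel, Real.rpow_zero, one_mul]
    _ = |t k| ^ (-m) * ((1 - x k) ^ (-m) - 1) := by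
        simpa [φ] using congrArg (|t k| ^ (-m) * ·) (sub_smul_dslope φ 0 (x k))
    _ = |t (k + 1)| ^ (-m) - |t k| ^ (-m) := by
        rw [hstep, abs_mul, abs_of_pos (sub_pos.2 hk),
          Real.mul_rpow (abs_nonneg _) (sub_pos.2 hk).le]
        ring

theorem tendsto_rpow_inv_mul_of_tendsto_rpow_neg_succ_sub {s : ℕ → ℝ} {m L : ℝ} (hm : 0 < m)
    (hL : 0 < L) (hs : ∀ k, 0 < s k)
    (h : Tendsto (fun k => s (k + 1) ^ (-m) - s k ^ (-m)) atTop (𝓝 L)) :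
    Tendsto (fun k : ℕ => L ^ (1 / m) * (k : ℝ) ^ (1 / m) * s k) atTop (𝓝 1) := by
  have hmean : Tendsto (fun n : ℕ => (n : ℝ)⁻¹ * s n ^ (-m)) atTop (𝓝 L) := by
    have hcesaro := h.cesaro
    simp only [Finset.sum_range_sub (fun k => s k ^ (-m))] at hcesaro
    have := hcesaro.add ((tendsto_inv_atTop_nhds_zero_nat (𝕜 := ℝ)).mul_const (s 0 ^ (-m)))
    simpa only [← mul_add, sub_add_cancel, zero_mul, add_zero] using this
  have hroot := ((hmean.inv₀ hL.ne').const_mul L).rpow_const (p := 1 / m)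
    (Or.inr (one_div_pos.2 hm).le)
  rw [mul_inv_cancel₀ hL.ne', Real.one_rpow] at hroot
  refine hroot.congr fun k => ?_
  have hsm : 0 ≤ s k ^ m := Real.rpow_nonneg (hs k).le m
  rw [Real.rpow_neg (hs k).le, mul_inv, inv_inv, inv_inv, ← mul_assoc,
    Real.mul_rpow (by positivity) hsm, Real.mul_rpow hL.le (Nat.cast_nonneg k), one_div,
    Real.rpow_rpow_inv (hs k).le hm.ne']

theorem exists_bounds_of_tendsto_mul_rpow {s : ℕ → ℝ} {r C : ℝ} (hC : 0 < C)
    (h : Tendsto (fun k : ℕ => C * (k : ℝ) ^ r * s k) atTop (𝓝 1)) :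
    ∃ C₁ C₂ : ℝ, ∃ K : ℕ, 0 < C₁ ∧ C₁ ≤ C₂ ∧ ∀ k ≥ K,
      C₁ * (k : ℝ) ^ (-r) ≤ s k ∧ s k ≤ C₂ * (k : ℝ) ^ (-r) := by
  obtain ⟨K, hK⟩ := eventually_atTop.1 <| (eventually_gt_atTop 0).and <|
    (h.eventually_const_le (by norm_num : (1 / 2 : ℝ) < 1)).and
      (h.eventually_le_const one_lt_two)
  refine ⟨(1 / 2) / C, 2 / C, K, by positivity, by gcongr; norm_num, fun k hk => ?_⟩
  obtain ⟨hk0, hlower, hupper⟩ := hK k hk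
  have : 0 < (k : ℝ) ^ r := Real.rpow_pos_of_pos (Nat.cast_pos.2 hk0) r
  rw [Real.rpow_neg (Nat.cast_nonneg k), ← div_eq_mul_inv, ← div_eq_mul_inv, div_div _ C,
    div_div _ C, div_le_iff₀' (by positivity), le_div_iff₀' (by positivity)]
  exact ⟨hlower, hupper⟩

end Sequences

section Convex

variable {φ : ℝ → ℝ} {c p : ℝ}

theorem add_mul_sub_le_of_convexOn_univ {φ' x : ℝ} (hφ : ConvexOn ℝ Set.univ φ)
    (hx : HasDerivAt φ φ' x) (y : ℝ) : φ x + φ' * (y - x) ≤ φ y := by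
  rcases lt_trichotomy x y with hxy | rfl | hyx
  · have := hφ.le_slope_of_hasDerivAt (Set.mem_univ x) (Set.mem_univ y) hxy hx
    rw [slope_def_field, le_div_iff₀ (sub_pos.2 hxy)] at this
    linarith
  · simp
  · have := hφ.slope_le_of_hasDerivAt (Set.mem_univ y) (Set.mem_univ x) hyx hx
    rw [slope_def_field, div_le_iff₀ (sub_pos.2 hyx)] at this
    linarith

theorem exists_mem_Ioo_abs_add_rpow_sub_le (p : ℝ) {ε : ℝ} (hε : 0 < ε) :
    ∃ δ ∈ Set.Ioo (0 : ℝ) 1, |(1 + δ) ^ p - 1 - p * δ| ≤ ε * δ ∧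
      |(1 - δ) ^ p - 1 + p * δ| ≤ ε * δ := by
  have hder : HasDerivAt (fun y : ℝ => (1 + y) ^ p) p 0 := by
    simpa using ((hasDerivAt_id (0 : ℝ)).const_add 1).rpow_const (p := p) (Or.inl (by simp))
  have hsmall := hder.isLittleO.bound hε
  have hneg_lim : Tendsto (fun δ : ℝ => -δ) (𝓝 0) (𝓝 0) := by
    simpa using continuous_neg.tendsto (0 : ℝ)
  obtain ⟨δ, ⟨hpos, hneg⟩, hδ⟩ := (((hsmall.and (hneg_lim.eventually hsmall)).filter_mono
    nhdsWithin_le_nhds).and (Ioo_mem_nhdsGT (zero_lt_one' ℝ))).exists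
  refine ⟨δ, hδ, ?_, ?_⟩
  · simpa [abs_of_pos hδ.1, mul_comm] using hpos
  · simpa [abs_of_pos hδ.1, mul_comm, sub_eq_add_neg] using hneg

/- Convexity squeezes `δ * (t * φ' t)` between the increments of `φ` over `[(1 - δ) * t, t]` and
`[t, (1 + δ) * t]`. -/
theorem isLittleO_mul_deriv_sub_of_convexOn {φ' : ℝ → ℝ} (hφ : ConvexOn ℝ Set.univ φ)
    (hφ' : ∀ t, HasDerivAt φ (φ' t) t)
    (h : (fun t => φ t - c * |t| ^ p) =o[𝓝 0] fun t => |t| ^ p) :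
    (fun t => t * φ' t - p * c * |t| ^ p) =o[𝓝 0] fun t => |t| ^ p := by
  have hscale (r : ℝ) (hr : 0 ≤ r) :
      (fun t => φ (r * t) - c * r ^ p * |t| ^ p) =o[𝓝 0] fun t => |t| ^ p := by
    have hlim : Tendsto (fun t : ℝ => r * t) (𝓝 0) (𝓝 0) := by
      simpa using (continuous_const_mul r).tendsto 0
    have hpow (t : ℝ) : |r * t| ^ p = r ^ p * |t| ^ p := by
      rw [abs_mul, abs_of_nonneg hr, Real.mul_rpow hr (abs_nonneg t)]
    have := h.comp_tendsto hlim
    simp only [Function.comp_def, hpow, ← mul_assoc] at this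
    exact this.trans_isBigO (isBigO_const_mul_self _ _ _)
  refine isLittleO_iff.2 fun η hη => ?_
  obtain ⟨ε, hε, hεη⟩ : ∃ ε > 0, (|c| + 2) * ε ≤ η :=
    ⟨η / (|c| + 2), by positivity, by field_simp; rfl⟩
  obtain ⟨δ, ⟨hδ, hδ1⟩, hright, hleft⟩ := exists_mem_Ioo_abs_add_rpow_sub_le p hε
  filter_upwards [h.bound (mul_pos hε hδ), (hscale (1 + δ) (by linarith)).bound (mul_pos hε hδ),
    (hscale (1 - δ) (by linarith)).bound (mul_pos hε hδ)] with t hmid hplus hminus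
  have hconv (y : ℝ) := add_mul_sub_le_of_convexOn_univ hφ (hφ' t) y
  have hP : 0 ≤ |t| ^ p := by positivity
  simp only [Real.norm_eq_abs, abs_of_nonneg hP] at hmid hplus hminus ⊢
  set P := |t| ^ p
  have hcerr {x : ℝ} (hx : |x| ≤ ε * δ) : |c * P * x| ≤ |c| * P * (ε * δ) := by
    rw [abs_mul, abs_mul, abs_of_nonneg hP]
    gcongr
  have hupper : δ * (t * φ' t - p * c * P) ≤ δ * ((|c| + 2) * ε * P) := by
    have := hconv ((1 + δ) * t)
    have := abs_le.1 (hcerr hright)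
    linarith [abs_le.1 hmid, abs_le.1 hplus]
  have hlower : δ * (-((|c| + 2) * ε * P)) ≤ δ * (t * φ' t - p * c * P) := by
    have := hconv ((1 - δ) * t)
    have := abs_le.1 (hcerr hleft)
    linarith [abs_le.1 hmid, abs_le.1 hminus]
  refine (abs_le.2 ⟨le_of_mul_le_mul_left hlower hδ, le_of_mul_le_mul_left hupper hδ⟩).trans ?_
  gcongr

theorem pos_of_convexOn_of_eventually_pos {φ : ℝ → ℝ} (hφ : ConvexOn ℝ Set.univ φ) (h0 : φ 0 = 0)
    (hpos : ∀ᶠ t in 𝓝[≠] 0, 0 < φ t) {t : ℝ} (ht : t ≠ 0) : 0 < φ t := by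
  have hlim : Tendsto (fun δ => δ * t) (𝓝[>] 0) (𝓝[≠] 0) := by
    refine tendsto_nhdsWithin_iff.2 ⟨?_, ?_⟩
    · simpa using ((continuous_mul_const t).tendsto 0).mono_left nhdsWithin_le_nhds
    · filter_upwards [self_mem_nhdsWithin] with δ hδ using mul_ne_zero (ne_of_gt hδ) ht
  obtain ⟨δ, hδt, hδ, hδ1⟩ :=
    ((hlim.eventually hpos).and (Ioo_mem_nhdsGT (zero_lt_one' ℝ))).exists
  have hle := hφ.2 (Set.mem_univ t) (Set.mem_univ 0) hδ.le (sub_nonneg.2 hδ1.le) (by ring)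
  simp only [smul_eq_mul, h0, mul_zero, add_zero] at hle
  exact pos_of_mul_pos_right (hδt.trans_le hle) hδ.le

end Convex

section Line

variable {V : Type*} [AddCommGroup V] [Module ℝ V] {f : V → ℝ} {e : V} {c p : ℝ}

theorem convexOn_comp_smul (hconv : ConvexOn ℝ Set.univ f) (e : V) :
    ConvexOn ℝ Set.univ fun t : ℝ => f (t • e) :=
  hconv.comp_linearMap (LinearMap.toSpanSingleton ℝ V e)

theorem apply_zero_of_isEquivalent_rpow (hp : p ≠ 0)
    (hlow : (fun t : ℝ => f (t • e)) ~[𝓝 0] fun t => c * |t| ^ p) : f 0 = 0 := by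
  obtain ⟨C, hC⟩ := hlow.isBigO.bound
  simpa [Real.zero_rpow hp] using hC.self_of_nhds

theorem apply_smul_pos_of_isEquivalent_rpow (hconv : ConvexOn ℝ Set.univ f) (hc : 0 < c)
    (hp : p ≠ 0) (hlow : (fun t : ℝ => f (t • e)) ~[𝓝 0] fun t => c * |t| ^ p) {t : ℝ}
    (ht : t ≠ 0) : 0 < f (t • e) := by
  refine pos_of_convexOn_of_eventually_pos (convexOn_comp_smul hconv e)
    (by simpa using apply_zero_of_isEquivalent_rpow hp hlow) ?_ ht
  refine (hlow.mono nhdsWithin_le_nhds).eventually_pos ?_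
  filter_upwards [self_mem_nhdsWithin] with s hs
  exact mul_pos hc (Real.rpow_pos_of_pos (abs_pos.2 hs) p)

theorem sublevel_inter_span_singleton (hconv : ConvexOn ℝ Set.univ f) (hc : 0 < c)
    (hp : p ≠ 0) (hlow : (fun t : ℝ => f (t • e)) ~[𝓝 0] fun t => c * |t| ^ p) :
    {v | f v ≤ 0} ∩ (Submodule.span ℝ {e} : Submodule ℝ V) = {0} := by
  refine Set.eq_singleton_iff_unique_mem.2
    ⟨⟨(apply_zero_of_isEquivalent_rpow hp hlow).le, zero_mem _⟩, ?_⟩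
  rintro v ⟨hv, hvB⟩
  obtain ⟨t, rfl⟩ := Submodule.mem_span_singleton.1 hvB
  rcases eq_or_ne t 0 with rfl | ht
  · exact zero_smul ℝ e
  · exact absurd hv (apply_smul_pos_of_isEquivalent_rpow hconv hc hp hlow ht).not_ge

end Line

namespace IsMetricProj

theorem apply_eq_zero_of_pos {V : Type*} [NormedAddCommGroup V] [NormedSpace ℝ V]
    {f : V → ℝ} {p w : V} (h : IsMetricProj {v | f v ≤ 0} p w) (hf : Continuous f) (hp : 0 < f p) :
    f w = 0 := by
  refine le_antisymm h.1 (not_lt.1 fun hw => ?_)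
  have hmin : IsLocalMin (fun v => dist v p) w := by
    filter_upwards [hf.tendsto w |>.eventually_lt_const hw] with v hv
    simpa only [dist_eq_norm] using h.2 v hv.le
  have hwp := IsMinOn.of_isLocalMin_of_convex_univ hmin (convexOn_univ_dist p) p
  rw [dist_self, dist_le_zero] at hwp
  exact hp.not_gt (hwp ▸ hw)

end IsMetricProj

section InnerProductSpace

variable {E : Type*} [NormedAddCommGroup E] [InnerProductSpace ℝ E]

namespace IsMetricProj

theorem inner_sub_sub_nonpos {K : Set E} {p w s : E} (h : IsMetricProj K p w) (hK : Convex ℝ K)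
    (hs : s ∈ K) : inner ℝ (p - w) (s - w) ≤ 0 := by
  refine (norm_eq_iInf_iff_real_inner_le_zero hK h.1).1 ?_ s hs
  have : Nonempty K := ⟨⟨w, h.1⟩⟩
  refine le_antisymm (le_ciInf fun s => ?_) (ciInf_le (f := fun s : K => ‖p - s‖) ?_ ⟨w, h.1⟩)
  · simpa only [norm_sub_rev p] using h.2 s s.2
  · exact ⟨0, Set.forall_mem_range.2 fun s => norm_nonneg _⟩

theorem norm_sub_sq_add_norm_sub_sq_le {K : Set E} {p w s : E} (h : IsMetricProj K p w)
    (hK : Convex ℝ K) (hs : s ∈ K) : ‖w - s‖ ^ 2 + ‖p - w‖ ^ 2 ≤ ‖p - s‖ ^ 2 := by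
  have hangle := h.inner_sub_sub_nonpos hK hs
  rw [← sub_add_sub_cancel p w s, norm_add_sq_real]
  rw [← neg_sub w s, inner_neg_right] at hangle
  linarith

theorem norm_sub_le {K : Set E} {p w s : E} (h : IsMetricProj K p w) (hK : Convex ℝ K)
    (hs : s ∈ K) : ‖w - s‖ ≤ ‖p - s‖ := by
  refine (pow_le_pow_iff_left₀ (norm_nonneg _) (norm_nonneg _) two_ne_zero).1 ?_
  linarith [h.norm_sub_sq_add_norm_sub_sq_le hK hs, sq_nonneg ‖p - w‖]

theorem tendsto {ι : Type*} {l : Filter ι} {K : Set E} {x w : ι → E} {s : E}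
    (h : ∀ i, IsMetricProj K (x i) (w i)) (hK : Convex ℝ K) (hs : s ∈ K)
    (hx : Tendsto x l (𝓝 s)) : Tendsto w l (𝓝 s) := by
  rw [tendsto_iff_norm_sub_tendsto_zero] at hx ⊢
  exact squeeze_zero (fun i => norm_nonneg _) (fun i => (h i).norm_sub_le hK hs) hx

theorem inner_sub_eq_zero {B : Submodule ℝ E} {p u v : E} (h : IsMetricProj (B : Set E) p u)
    (hv : v ∈ B) : inner ℝ (p - u) v = 0 := by
  have hpos := h.inner_sub_sub_nonpos B.convex (B.add_mem h.1 hv)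
  have hneg := h.inner_sub_sub_nonpos B.convex (B.sub_mem h.1 hv)
  rw [add_sub_cancel_left] at hpos
  rw [sub_sub_cancel_left, inner_neg_right] at hneg
  linarith

theorem exists_sub_eq_smul_gradient [CompleteSpace E] {f : E → ℝ} {p w : E}
    (h : IsMetricProj {v | f v ≤ 0} p w) (hf : HasStrictFDerivAt f (fderiv ℝ f w) w)
    (hw : f w = 0) (hgrad : gradient f w ≠ 0) : ∃ r : ℝ, p - w = r • gradient f w := by
  have hmin : IsLocalMinOn (fun v => ‖v - p‖ ^ 2) {v | f v = f w} w := by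
    filter_upwards [self_mem_nhdsWithin] with v hv
    exact pow_le_pow_left₀ (norm_nonneg _) (h.2 v (hv.trans hw).le) 2
  have hdist : HasStrictFDerivAt (fun v => ‖v - p‖ ^ 2) (2 • innerSL ℝ (w - p)) w := by
    simpa using (hasStrictFDerivAt_norm_sq (w - p)).comp w ((hasStrictFDerivAt_id w).sub_const p)
  obtain ⟨a, b, hab, hlin⟩ :=
    IsLocalExtrOn.exists_multipliers_of_hasStrictFDerivAt_1d (Or.inl hmin) hf hdist
  have hlin : a • gradient f w + (2 * b) • (w - p) = 0 := ext_inner_right ℝ fun v => by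
    simpa [inner_add_left, inner_sub_left, real_inner_smul_left, mul_assoc, mul_left_comm]
      using congrArg (fun L => L v) hlin
  have hb : b ≠ 0 := by
    rintro rfl
    exact hab (Prod.ext (by simpa [hgrad] using hlin) rfl)
  refine ⟨a / (2 * b), ?_⟩
  rw [div_eq_inv_mul, mul_smul, eq_neg_of_add_eq_zero_left hlin, smul_neg,
    inv_smul_smul₀ (by simpa using hb), neg_sub]

end IsMetricProj

section AlternatingProjections

variable {A : Set E} {B : Submodule ℝ E} {u w : ℕ → E}

theorem norm_succ_sq_add_norm_sub_sq_le_of_alternating (hA : Convex ℝ A) (hA0 : (0 : E) ∈ A)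
    (hw : ∀ k, IsMetricProj A (u k) (w k)) (hu : ∀ k, IsMetricProj (B : Set E) (w k) (u (k + 1)))
    (k : ℕ) : ‖u (k + 1)‖ ^ 2 + ‖w k - u (k + 1)‖ ^ 2 ≤ ‖u k‖ ^ 2 := by
  have hwu : ‖w k‖ ^ 2 + ‖u k - w k‖ ^ 2 ≤ ‖u k‖ ^ 2 := by
    simpa using (hw k).norm_sub_sq_add_norm_sub_sq_le hA hA0
  have huw : ‖u (k + 1)‖ ^ 2 + ‖w k - u (k + 1)‖ ^ 2 ≤ ‖w k‖ ^ 2 := by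
    simpa using (hu k).norm_sub_sq_add_norm_sub_sq_le B.convex B.zero_mem
  linarith [sq_nonneg ‖u k - w k‖]

theorem antitone_norm_of_alternating (hA : Convex ℝ A) (hA0 : (0 : E) ∈ A)
    (hw : ∀ k, IsMetricProj A (u k) (w k)) (hu : ∀ k, IsMetricProj (B : Set E) (w k) (u (k + 1))) :
    Antitone fun k => ‖u k‖ := antitone_nat_of_succ_le fun k => by
  have hwu : ‖w k‖ ≤ ‖u k‖ := by simpa using (hw k).norm_sub_le hA hA0
  have huw : ‖u (k + 1)‖ ≤ ‖w k‖ := by simpa using (hu k).norm_sub_le B.convex B.zero_mem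
  exact huw.trans hwu

theorem tendsto_sub_succ_of_alternating (hA : Convex ℝ A) (hA0 : (0 : E) ∈ A)
    (hw : ∀ k, IsMetricProj A (u k) (w k)) (hu : ∀ k, IsMetricProj (B : Set E) (w k) (u (k + 1))) :
    Tendsto (fun k => w k - u (k + 1)) atTop (𝓝 0) := by
  have hlim : Tendsto (fun k => ‖u k‖ ^ 2) atTop (𝓝 ((⨅ k, ‖u k‖) ^ 2)) :=
    (tendsto_atTop_ciInf (antitone_norm_of_alternating hA hA0 hw hu)
      ⟨0, Set.forall_mem_range.2 fun k => norm_nonneg _⟩).pow 2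
  have hdecr : Tendsto (fun k => ‖u k‖ ^ 2 - ‖u (k + 1)‖ ^ 2) atTop (𝓝 0) := by
    simpa using hlim.sub (hlim.comp (tendsto_add_atTop_nat 1))
  have hsq : Tendsto (fun k => ‖w k - u (k + 1)‖ ^ 2) atTop (𝓝 0) :=
    squeeze_zero (fun k => sq_nonneg _) (fun k => le_sub_iff_add_le'.2 <|
      norm_succ_sq_add_norm_sub_sq_le_of_alternating hA hA0 hw hu k) hdecr
  exact tendsto_zero_iff_norm_tendsto_zero.2 (by simpa using hsq.sqrt)

theorem tendsto_zero_of_alternating [FiniteDimensional ℝ B] (hA : Convex ℝ A) (hAc : IsClosed A)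
    (hAB : A ∩ B = {0})
    (hw : ∀ k, IsMetricProj A (u k) (w k)) (hu : ∀ k, IsMetricProj (B : Set E) (w k) (u (k + 1))) :
    Tendsto u atTop (𝓝 0) := by
  have hA0 : (0 : E) ∈ A := (hAB.ge (Set.mem_singleton 0)).1
  have hanti := antitone_norm_of_alternating hA hA0 hw hu
  let b (k : ℕ) : B := ⟨u (k + 1), (hu k).1⟩
  have hb (k : ℕ) : b k ∈ Metric.closedBall (0 : B) ‖u 0‖ :=
    mem_closedBall_zero_iff.2 (hanti (Nat.zero_le (k + 1)))
  obtain ⟨z, -, ψ, hψ, hbz⟩ := (isCompact_closedBall (0 : B) ‖u 0‖).tendsto_subseq hb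
  have huz : Tendsto (fun k => u (ψ k + 1)) atTop (𝓝 (z : E)) :=
    (continuous_subtype_val.tendsto z).comp hbz
  have hwz : Tendsto (fun k => w (ψ k)) atTop (𝓝 (z : E)) := by
    simpa using ((tendsto_sub_succ_of_alternating hA hA0 hw hu).comp hψ.tendsto_atTop).add huz
  have hz : (z : E) = 0 :=
    hAB.le ⟨hAc.mem_of_tendsto hwz (Eventually.of_forall fun k => (hw _).1), z.2⟩
  rw [tendsto_zero_iff_norm_tendsto_zero]
  refine (tendsto_iff_tendsto_subseq_of_antitone hanti
    ((tendsto_add_atTop_nat 1).comp hψ.tendsto_atTop)).2 ?_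
  simpa [Function.comp_def, hz] using huz.norm

end AlternatingProjections

section Gradient

variable [CompleteSpace E] {f : E → ℝ} {ι : Type*} {l : Filter ι} {x y : ι → E} {x₀ : E}

theorem continuous_gradient (hf : ContDiff ℝ 1 f) : Continuous (gradient f) :=
  (InnerProductSpace.toDual ℝ E).symm.continuous.comp (hf.continuous_fderiv one_ne_zero)

theorem isBigO_gradient_sub_gradient (hf : ContDiffAt ℝ 2 f x₀)
    (hx : Tendsto x l (𝓝 x₀)) (hy : Tendsto y l (𝓝 x₀)) :
    (fun i => gradient f (x i) - gradient f (y i)) =O[l] fun i => x i - y i := by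
  have hstrict : HasStrictFDerivAt (fderiv ℝ f) (fderiv ℝ (fderiv ℝ f) x₀) x₀ :=
    (hf.fderiv_right (m := 1) le_rfl).hasStrictFDerivAt one_ne_zero
  have hnorm (i : ι) : ‖gradient f (x i) - gradient f (y i)‖ =
      ‖fderiv ℝ f (x i) - fderiv ℝ f (y i)‖ := by
    rw [gradient, gradient, ← map_sub, LinearIsometryEquiv.norm_map]
  refine .of_norm_left ?_
  simp only [hnorm]
  exact (hstrict.isBigO_sub.comp_tendsto (hx.prodMk_nhds hy)).norm_left

theorem isEquivalent_mul_norm_gradient_sq {r : ι → ℝ} (hf : ContDiff ℝ 1 f)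
    (hgrad : gradient f x₀ ≠ 0) (hx : Tendsto x l (𝓝 x₀)) (hy : Tendsto y l (𝓝 x₀))
    (hxy : ∀ᶠ i in l, x i - y i = r i • gradient f (y i)) :
    (fun i => f (x i) - f (y i)) ~[l] fun i => r i * ‖gradient f x₀‖ ^ 2 := by
  have hgy : Tendsto (fun i => gradient f (y i)) l (𝓝 (gradient f x₀)) :=
    ((continuous_gradient hf).tendsto x₀).comp hy
  have hsub : (fun i => x i - y i) =O[l] r := by
    simpa using ((isBigO_refl r l).smul (hgy.isBigO_one ℝ)).congr' (.symm hxy) .rfl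
  have htaylor : (fun i => f (x i) - f (y i) - r i * inner ℝ (gradient f x₀) (gradient f (y i)))
      =o[l] r := by
    have hstrict := hf.contDiffAt.hasStrictFDerivAt (x := x₀) one_ne_zero
    refine ((hstrict.isLittleO.comp_tendsto (hx.prodMk_nhds hy)).congr' ?_ .rfl).trans_isBigO hsub
    filter_upwards [hxy] with i hi
    rw [inner_gradient_left, ← smul_eq_mul, ← map_smul, ← hi]
    rfl
  have hinner : (fun i => r i * (inner ℝ (gradient f x₀) (gradient f (y i)) - ‖gradient f x₀‖ ^ 2))
      =o[l] r := by
    have hlim := ((tendsto_const_nhds (x := gradient f x₀)).inner (𝕜 := ℝ) hgy).sub_const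
      (‖gradient f x₀‖ ^ 2)
    rw [real_inner_self_eq_norm_sq, sub_self] at hlim
    simpa using (isBigO_refl r l).mul_isLittleO ((isLittleO_one_iff ℝ).2 hlim)
  have hnorm : ‖gradient f x₀‖ ^ 2 ≠ 0 := by simpa using hgrad
  have hr : r =O[l] fun i => r i * ‖gradient f x₀‖ ^ 2 := by
    simpa [mul_comm] using isBigO_self_const_mul hnorm r l
  refine ((htaylor.add hinner).trans_isBigO hr).congr_left fun i => ?_
  simp only [Pi.sub_apply]
  ring

end Gradient

section LeadingOrder

variable {f : E → ℝ} {e : E} {c p : ℝ}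

theorem tendsto_zero_of_alternating_sublevel {u w : ℕ → E} (hf : Continuous f)
    (hconv : ConvexOn ℝ Set.univ f) (hc : 0 < c) (hp : p ≠ 0)
    (hlow : (fun t : ℝ => f (t • e)) ~[𝓝 0] fun t => c * |t| ^ p)
    (hw : ∀ k, IsMetricProj {v | f v ≤ 0} (u k) (w k))
    (hu : ∀ k, IsMetricProj (Submodule.span ℝ {e} : Set E) (w k) (u (k + 1))) :
    Tendsto u atTop (𝓝 0) :=
  tendsto_zero_of_alternating (by simpa using hconv.convex_le 0) (isClosed_le hf continuous_const)
    (sublevel_inter_span_singleton hconv hc hp hlow) hw hu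

variable {ι : Type*} {l : Filter ι} {t t' : ι → ℝ} {w : ι → E}

theorem tendsto_zero_of_isMetricProj_sublevel (hconv : ConvexOn ℝ Set.univ f) (hp : p ≠ 0)
    (hlow : (fun t : ℝ => f (t • e)) ~[𝓝 0] fun t => c * |t| ^ p) (ht : Tendsto t l (𝓝 0))
    (hw : ∀ i, IsMetricProj {v | f v ≤ 0} (t i • e) (w i)) : Tendsto w l (𝓝 0) :=
  IsMetricProj.tendsto hw (by simpa using hconv.convex_le 0)
    (apply_zero_of_isEquivalent_rpow hp hlow).le (by simpa using ht.smul_const e)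

variable [CompleteSpace E]

theorem isLittleO_mul_inner_gradient_sub (hf : ContDiff ℝ 1 f) (hconv : ConvexOn ℝ Set.univ f)
    (hlow : (fun t : ℝ => f (t • e)) ~[𝓝 0] fun t => c * |t| ^ p) :
    (fun t : ℝ => t * inner ℝ (gradient f (t • e)) e - p * c * |t| ^ p) =o[𝓝 0]
      fun t => |t| ^ p := by
  refine isLittleO_mul_deriv_sub_of_convexOn (convexOn_comp_smul hconv e) (fun t => ?_)
    (hlow.isLittleO.trans_isBigO (isBigO_const_mul_self _ _ _))
  have hgrad : HasFDerivAt f (fderiv ℝ f (t • e)) (t • e) :=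
    (hf.differentiable one_ne_zero).differentiableAt.hasFDerivAt
  rw [inner_gradient_left]
  have hline : HasDerivAt (fun s : ℝ => s • e) e t := by
    simpa using (hasDerivAt_id t).smul_const e
  exact hgrad.comp_hasDerivAt t hline

theorem isEquivalent_inner_gradient_smul (hf : ContDiff ℝ 2 f) (hconv : ConvexOn ℝ Set.univ f)
    (hc : c ≠ 0) (hp : 0 < p) (hlow : (fun t : ℝ => f (t • e)) ~[𝓝 0] fun t => c * |t| ^ p)
    (ht : Tendsto t l (𝓝 0)) (hw : (fun i => t i • e - w i) =O[l] fun i => |t i| ^ p) :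
    (fun i => inner ℝ (gradient f (w i)) (t i • e)) ~[l] fun i => p * c * |t i| ^ p := by
  have hte : Tendsto (fun i => t i • e) l (𝓝 0) := by simpa using ht.smul_const e
  have hpow : Tendsto (fun i => |t i| ^ p) l (𝓝 0) := by
    simpa [hp.ne'] using ht.abs.rpow_const (Or.inr hp.le)
  have hwlim : Tendsto w l (𝓝 0) := by simpa using hte.sub (hw.trans_tendsto hpow)
  have hline := (isLittleO_mul_inner_gradient_sub (hf.of_le one_le_two) hconv hlow).comp_tendsto ht
  have hmove : (fun i => inner ℝ (gradient f (w i) - gradient f (t i • e)) (t i • e)) =o[l]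
      fun i => |t i| ^ p := by
    have hdiff := (isBigO_gradient_sub_gradient hf.contDiffAt hwlim hte).trans <|
      (hw.neg_left.congr_left fun i => neg_sub _ _)
    have hprod := hdiff.norm_left.mul_isLittleO ((isLittleO_one_iff ℝ).2 hte).norm_left
    refine (IsBigO.of_bound' (Eventually.of_forall fun i => ?_)).trans_isLittleO
      (by simpa using hprod)
    simpa using norm_inner_le_norm (𝕜 := ℝ) _ _
  refine (isLittleO_const_mul_right_iff (mul_ne_zero hp.ne' hc)).2 ?_
  refine (hline.add hmove).congr_left fun i => ?_
  simp only [Function.comp_apply, Pi.sub_apply, inner_sub_left, real_inner_smul_right]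
  ring

theorem exists_multipliers_of_isMetricProj (hf : ContDiff ℝ 1 f)
    (hconv : ConvexOn ℝ Set.univ f) (hgrad : gradient f 0 ≠ 0) (hc : 0 < c) (hp : p ≠ 0)
    (hlow : (fun t : ℝ => f (t • e)) ~[𝓝 0] fun t => c * |t| ^ p) (ht : Tendsto t l (𝓝 0))
    (hne : ∀ i, t i ≠ 0) (hw : ∀ i, IsMetricProj {v | f v ≤ 0} (t i • e) (w i)) :
    ∃ r : ι → ℝ, (∀ᶠ i in l, t i • e - w i = r i • gradient f (w i)) ∧
      r ~[l] fun i => c / ‖gradient f 0‖ ^ 2 * |t i| ^ p := by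
  have hte : Tendsto (fun i => t i • e) l (𝓝 0) := by simpa using ht.smul_const e
  have hw0 := tendsto_zero_of_isMetricProj_sublevel hconv hp hlow ht hw
  have hzero (i : ι) : f (w i) = 0 := (hw i).apply_eq_zero_of_pos hf.continuous
    (apply_smul_pos_of_isEquivalent_rpow hconv hc hp hlow (hne i))
  choose! r hr using fun i (hi : gradient f (w i) ≠ 0) =>
    (hw i).exists_sub_eq_smul_gradient (hf.contDiffAt.hasStrictFDerivAt one_ne_zero) (hzero i) hi
  replace hr : ∀ᶠ i in l, t i • e - w i = r i • gradient f (w i) :=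
    ((((continuous_gradient hf).tendsto 0).comp hw0).eventually_ne hgrad).mono hr
  refine ⟨r, hr, ?_⟩
  have hval : (fun i => r i * ‖gradient f 0‖ ^ 2) ~[l] fun i => c * |t i| ^ p := by
    have := isEquivalent_mul_norm_gradient_sq hf hgrad hte hw0 hr
    simp only [hzero, sub_zero] at this
    exact this.symm.trans (hlow.comp_tendsto ht)
  have hnorm : ‖gradient f 0‖ ^ 2 ≠ 0 := by simpa using hgrad
  refine ((hval.mul (IsEquivalent.refl (u := fun _ => (‖gradient f 0‖ ^ 2)⁻¹))).congr_left
    (.of_forall fun i => ?_)).congr_right (.of_forall fun i => ?_)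
  · exact mul_inv_cancel_right₀ hnorm (r i)
  · exact (div_mul_eq_mul_div _ _ _).symm

theorem isEquivalent_mul_sub_of_alternating (hf : ContDiff ℝ 2 f)
    (hconv : ConvexOn ℝ Set.univ f) (hgrad : gradient f 0 ≠ 0) (he : ‖e‖ = 1) (hc : 0 < c)
    (hp : 0 < p) (hlow : (fun t : ℝ => f (t • e)) ~[𝓝 0] fun t => c * |t| ^ p)
    (ht : Tendsto t l (𝓝 0)) (hne : ∀ i, t i ≠ 0)
    (hw : ∀ i, IsMetricProj {v | f v ≤ 0} (t i • e) (w i))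
    (hu : ∀ i, IsMetricProj (Submodule.span ℝ {e} : Set E) (w i) (t' i • e)) :
    (fun i => t i * (t i - t' i)) ~[l]
      fun i => p * (c / ‖gradient f 0‖) ^ 2 * |t i| ^ (2 * p) := by
  have hf1 : ContDiff ℝ 1 f := hf.of_le one_le_two
  have hw0 := tendsto_zero_of_isMetricProj_sublevel hconv hp.ne' hlow ht hw
  obtain ⟨r, hr, hrc⟩ :=
    exists_multipliers_of_isMetricProj hf1 hconv hgrad hc hp.ne' hlow ht hne hw
  have hrO : r =O[l] fun i => |t i| ^ p := hrc.isBigO.trans (isBigO_const_mul_self _ _ _)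
  have hwO : (fun i => t i • e - w i) =O[l] fun i => |t i| ^ p := by
    have hgw := ((continuous_gradient hf1).tendsto 0).comp hw0
    simpa using (hrO.smul (hgw.isBigO_one ℝ)).congr' (.symm hr) .rfl
  have hinner := isEquivalent_inner_gradient_smul hf hconv hc.ne' hp hlow ht hwO
  refine ((hrc.mul hinner).congr_right ?_).congr_left ?_
  · refine Eventually.of_forall fun i => ?_
    simp only [Pi.mul_apply, two_mul, Real.rpow_add (abs_pos.2 (hne i))]
    ring
  · filter_upwards [hr] with i hi
    have horth : inner ℝ (w i - t' i • e) (t i • e) = 0 :=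
      (hu i).inner_sub_eq_zero (Submodule.smul_mem _ _ (Submodule.mem_span_singleton_self e))
    calc r i * inner ℝ (gradient f (w i)) (t i • e)
        = inner ℝ (t i • e - w i) (t i • e) + inner ℝ (w i - t' i • e) (t i • e) := by
          rw [horth, add_zero, hi, real_inner_smul_left]
      _ = t i * (t i - t' i) := by
          rw [← inner_add_left, sub_add_sub_cancel, ← sub_smul, real_inner_smul_left,
            real_inner_smul_right, real_inner_self_eq_norm_sq, he]
          ring

theorem tendsto_norm_rpow_neg_succ_sub_of_alternating {u w : ℕ → E} (hf : ContDiff ℝ 2 f)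
    (hconv : ConvexOn ℝ Set.univ f) (hgrad : gradient f 0 ≠ 0) (he : ‖e‖ = 1) (hc : 0 < c)
    (hp : 1 < p) (hlow : (fun t : ℝ => f (t • e)) ~[𝓝 0] fun t => c * |t| ^ p)
    (hw : ∀ k, IsMetricProj {v | f v ≤ 0} (u k) (w k))
    (hu : ∀ k, IsMetricProj (Submodule.span ℝ {e} : Set E) (w k) (u (k + 1)))
    (hne : ∀ k, u k ≠ 0) :
    Tendsto (fun k => ‖u (k + 1)‖ ^ (-(2 * p - 2)) - ‖u k‖ ^ (-(2 * p - 2))) atTop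
      (𝓝 ((2 * p - 2) * p * (c / ‖gradient f 0‖) ^ 2)) := by
  have hp0 : 0 < p := one_pos.trans hp
  have hlim := tendsto_zero_of_alternating_sublevel hf.continuous hconv hc hp0.ne' hlow hw hu
  choose t ht using fun k => Submodule.mem_span_singleton.1 (hu k).1
  have hnorm (k : ℕ) : ‖u (k + 1)‖ = |t k| := by
    rw [← ht, norm_smul, he, mul_one, Real.norm_eq_abs]
  have htne (k : ℕ) : t k ≠ 0 := fun h => hne (k + 1) (by rw [← ht, h, zero_smul])
  have htlim : Tendsto t atTop (𝓝 0) := by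
    rw [tendsto_zero_iff_abs_tendsto_zero]
    simpa [Function.comp_def, hnorm] using (hlim.comp (tendsto_add_atTop_nat 1)).norm
  have hdecr := isEquivalent_mul_sub_of_alternating (t' := fun k => t (k + 1)) hf hconv hgrad he hc
    hp0 hlow htlim htne (fun k => ht k ▸ hw (k + 1)) fun k => ht (k + 1) ▸ hu (k + 1)
  have hpow (k : ℕ) : |t k| ^ (2 * p) ≠ 0 := (Real.rpow_pos_of_pos (abs_pos.2 (htne k)) _).ne'
  have hquot := hdecr.div (IsEquivalent.refl (u := fun k => |t k| ^ (2 * p)))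
  simp only [Pi.div_def, mul_div_cancel_right₀ _ (hpow _)] at hquot
  rw [← tendsto_add_atTop_iff_nat 1, mul_assoc (2 * p - 2), mul_comm (2 * p - 2)]
  simp only [hnorm]
  refine tendsto_abs_rpow_neg_succ_sub (by linarith) htlim htne ?_
  simpa only [sub_add_cancel] using hquot.tendsto_const

theorem tendsto_rpow_mul_norm_of_alternating {u w : ℕ → E} (hf : ContDiff ℝ 2 f)
    (hconv : ConvexOn ℝ Set.univ f) (hgrad : gradient f 0 ≠ 0) (he : ‖e‖ = 1) (hc : 0 < c)
    (hp : 1 < p) (hlow : (fun t : ℝ => f (t • e)) ~[𝓝 0] fun t => c * |t| ^ p)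
    (hw : ∀ k, IsMetricProj {v | f v ≤ 0} (u k) (w k))
    (hu : ∀ k, IsMetricProj (Submodule.span ℝ {e} : Set E) (w k) (u (k + 1)))
    (hne : ∀ k, u k ≠ 0) :
    Tendsto (fun k : ℕ => ((2 * p - 2) * p * (c / ‖gradient f 0‖) ^ 2) ^ (1 / (2 * p - 2)) *
      (k : ℝ) ^ (1 / (2 * p - 2)) * ‖u k‖) atTop (𝓝 1) := by
  have hm : 0 < 2 * p - 2 := by linarith
  have : 0 < ‖gradient f 0‖ := norm_pos_iff.2 hgrad
  exact tendsto_rpow_inv_mul_of_tendsto_rpow_neg_succ_sub hm (by positivity)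
    (fun k => norm_pos_iff.2 (hne k))
    (tendsto_norm_rpow_neg_succ_sub_of_alternating hf hconv hgrad he hc hp hlow hw hu hne)

end LeadingOrder

end InnerProductSpace

theorem even_of_isEquivalent_pow {φ : ℝ → ℝ} {c : ℝ} {d : ℕ} (hφ : ∀ t, 0 ≤ φ t) (hc : 0 < c)
    (h : φ ~[𝓝 0] fun t => c * t ^ d) : Even d := by
  by_contra hd
  have hneg : ∀ᶠ t in 𝓝[<] 0, φ t < 0 := by
    refine (h.mono nhdsWithin_le_nhds).eventually_neg ?_
    filter_upwards [self_mem_nhdsWithin] with t ht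
    exact mul_neg_of_pos_of_neg hc ((Nat.not_even_iff_odd.1 hd).pow_neg ht)
  obtain ⟨t, ht⟩ := hneg.exists
  exact (hφ t).not_gt ht

theorem isEquivalent_abs_rpow_of_isBigO {φ : ℝ → ℝ} {c : ℝ} {d : ℕ} (hφ : ∀ t, 0 ≤ φ t)
    (hc : 0 < c) (h : (fun t => φ t - c * t ^ d) =O[𝓝 0] fun t => t ^ (d + 1)) :
    φ ~[𝓝 0] fun t => c * |t| ^ (d : ℝ) := by
  have hpow : φ ~[𝓝 0] fun t => c * t ^ d :=
    (h.trans_isLittleO (isLittleO_pow_pow d.lt_succ_self)).trans_isBigO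
      (isBigO_self_const_mul hc.ne' _ _)
  simpa only [Real.rpow_natCast, (even_of_isEquivalent_pow hφ hc hpow).pow_abs] using hpow

section Epigraph

variable {n : ℕ} {g : (Fin n → ℝ) → ℝ}

/-- The function `(x, z) ↦ g x - z`, whose sublevel set at height `0` is the epigraph of `g`. The
last of the `n + 1` coordinates plays the role of `z`. -/
def epigraphFun (g : (Fin n → ℝ) → ℝ) (v : EuclideanSpace ℝ (Fin (n + 1))) : ℝ :=
  g (fun i => v i.castSucc) - v (Fin.last n)

/-- The point `(x, 0)` of `ℝⁿ × ℝ = ℝⁿ⁺¹`. -/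
def horizontal (x : EuclideanSpace ℝ (Fin n)) : EuclideanSpace ℝ (Fin (n + 1)) :=
  WithLp.toLp 2 (Fin.snoc x 0)

theorem norm_horizontal (x : EuclideanSpace ℝ (Fin n)) : ‖horizontal x‖ = ‖x‖ := by
  simp [horizontal, EuclideanSpace.norm_eq, Fin.sum_univ_castSucc]

theorem epigraphFun_smul_horizontal (g : (Fin n → ℝ) → ℝ) (t : ℝ) (x : EuclideanSpace ℝ (Fin n)) :
    epigraphFun g (t • horizontal x) = g (t • x) := by
  simp [epigraphFun, horizontal, Pi.smul_def]

theorem contDiff_epigraphFun {m : WithTop ℕ∞} (hg : ContDiff ℝ m g) :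
    ContDiff ℝ m (epigraphFun g) := by
  unfold epigraphFun
  fun_prop

theorem convexOn_epigraphFun (hg : ConvexOn ℝ Set.univ g) :
    ConvexOn ℝ Set.univ (epigraphFun g) := by
  have hbase := hg.comp_linearMap
    (LinearMap.pi fun i : Fin n => (EuclideanSpace.proj (𝕜 := ℝ) i.castSucc).toLinearMap)
  have hlast := (EuclideanSpace.proj (𝕜 := ℝ) (Fin.last n)).toLinearMap.concaveOn convex_univ
  exact hbase.sub hlast

theorem hasGradientAt_epigraphFun_zero (hg : DifferentiableAt ℝ g 0) (hmin : IsLocalMin g 0) :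
    HasGradientAt (epigraphFun g) (-EuclideanSpace.single (Fin.last n) 1) 0 := by
  let base : EuclideanSpace ℝ (Fin (n + 1)) →L[ℝ] Fin n → ℝ :=
    .pi fun i => EuclideanSpace.proj i.castSucc
  have hbase : HasFDerivAt (fun v => g (base v)) (0 : _ →L[ℝ] ℝ) 0 := by
    have hg0 := hg.hasFDerivAt
    rw [hmin.fderiv_eq_zero, ← map_zero base] at hg0
    exact (hg0.comp 0 base.hasFDerivAt).congr_fderiv (ContinuousLinearMap.zero_comp _)
  have hlast := (EuclideanSpace.proj (𝕜 := ℝ) (Fin.last n)).hasFDerivAt (x := 0)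
  refine hasGradientAt_iff_hasFDerivAt.2 ((hbase.sub hlast).congr_fderiv ?_)
  ext v
  simp [EuclideanSpace.inner_single_left]

end Epigraph

theorem stmt8_general {n : ℕ} {g : (Fin n → ℝ) → ℝ} (hg : ContDiff ℝ 2 g)
    (hconv : ConvexOn ℝ Set.univ g) (hg0 : g 0 = 0) (hnonneg : ∀ x, 0 ≤ g x)
    {A : Set (EuclideanSpace ℝ (Fin (n + 1)))}
    (hA : A = {u | g (fun i => u i.castSucc) ≤ u (Fin.last n)})
    {a : EuclideanSpace ℝ (Fin n)} (ha : a ≠ 0) {B : Set (EuclideanSpace ℝ (Fin (n + 1)))}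
    (hB : B = Set.range fun t : ℝ => t • horizontal a) {c p : ℝ} (hc : 0 < c) (hp : 1 < p)
    (hlow : (fun t : ℝ => g (fun i => t / ‖a‖ * a i)) ~[𝓝 0] fun t => c * |t| ^ p)
    {u : ℕ → EuclideanSpace ℝ (Fin (n + 1))}
    (hstep : ∀ k, ∃ w, IsMetricProj A (u k) w ∧ IsMetricProj B w (u (k + 1)))
    (hne : ∀ k, u k ≠ 0) :
    Tendsto u atTop (𝓝 0) ∧
    Tendsto (fun k : ℕ => ((2 * p - 2) * p * c ^ 2) ^ (1 / (2 * p - 2)) *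
      (k : ℝ) ^ (1 / (2 * p - 2)) * ‖u k‖) atTop (𝓝 1) ∧
    ∃ C₁ C₂ : ℝ, ∃ K : ℕ, 0 < C₁ ∧ C₁ ≤ C₂ ∧ ∀ k ≥ K,
      C₁ * (k : ℝ) ^ (-(1 / (2 * p - 2))) ≤ ‖u k‖ ∧
      ‖u k‖ ≤ C₂ * (k : ℝ) ^ (-(1 / (2 * p - 2))) := by
  have hnorm : ‖a‖ ≠ 0 := norm_ne_zero_iff.2 ha
  set e := ‖a‖⁻¹ • horizontal a
  have he : ‖e‖ = 1 := by simp [e, norm_smul, norm_horizontal, hnorm]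
  have hBe : B = Submodule.span ℝ {e} := by
    rw [Submodule.span_singleton_smul_eq (isUnit_iff_ne_zero.2 (inv_ne_zero hnorm)), hB,
      Submodule.span_singleton_eq_range]
  have hAf : A = {v | epigraphFun g v ≤ 0} := by simp [hA, epigraphFun]
  have hgrad : ‖gradient (epigraphFun g) 0‖ = 1 := by
    simp [(hasGradientAt_epigraphFun_zero (hg.differentiable two_ne_zero).differentiableAt
      (.of_forall fun x => hg0.trans_le (hnonneg x))).gradient]
  have hline : (fun t : ℝ => epigraphFun g (t • e)) ~[𝓝 0] fun t => c * |t| ^ p := by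
    simp only [e, smul_smul, epigraphFun_smul_horizontal]
    exact hlow
  subst hAf hBe
  choose w hw hu using hstep
  have hf := contDiff_epigraphFun hg
  have hfconv := convexOn_epigraphFun hconv
  have hrate := tendsto_rpow_mul_norm_of_alternating hf hfconv
    (norm_ne_zero_iff.1 (hgrad ▸ one_ne_zero)) he hc hp hline hw hu hne
  rw [hgrad, div_one] at hrate
  have hp0 : 0 < p := one_pos.trans hp
  have hm : 0 < 2 * p - 2 := by linarith
  exact ⟨tendsto_zero_of_alternating_sublevel hf.continuous hfconv hc hp0.ne' hline hw hu, hrate,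
    exists_bounds_of_tendsto_mul_rpow (by positivity) hrate⟩

theorem stmt8 (n : ℕ) (g : MvPolynomial (Fin n) ℝ)
    (hconv : ConvexOn ℝ Set.univ (fun x : Fin n → ℝ => MvPolynomial.eval x g))
    (hg0 : MvPolynomial.eval (fun _ : Fin n => (0 : ℝ)) g = 0)
    (hgpos : ∀ x : Fin n → ℝ, x ≠ 0 → 0 < MvPolynomial.eval x g)
    (A : Set (EuclideanSpace ℝ (Fin (n + 1))))
    (hA : A = {u | MvPolynomial.eval (fun i : Fin n => u i.castSucc) g ≤ u (Fin.last n)})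
    (a : EuclideanSpace ℝ (Fin n)) (ha : a ≠ 0)
    (B : Set (EuclideanSpace ℝ (Fin (n + 1))))
    (hB : B = Set.range (fun t : ℝ =>
      t • (WithLp.equiv 2 (Fin (n + 1) → ℝ)).symm (Fin.snoc (fun i => a i) 0)))
    (c₀ : ℝ) (hc₀ : 0 < c₀) (d : ℕ) (hd : 2 ≤ d)
    (hlow : (fun t : ℝ =>
        MvPolynomial.eval (fun i : Fin n => t / ‖a‖ * a i) g - c₀ * t ^ d)
      =O[nhds 0] fun t : ℝ => t ^ (d + 1))
    (u : ℕ → EuclideanSpace ℝ (Fin (n + 1)))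
    (hstep : ∀ k, ∃ w, IsMetricProj A (u k) w ∧ IsMetricProj B w (u (k + 1)))
    (hne : ∀ k, u k ≠ 0) :
    Tendsto u atTop (nhds 0) ∧
    Tendsto (fun k : ℕ =>
        ((2 * (d : ℝ) - 2) * d * c₀ ^ 2) ^ (1 / (2 * (d : ℝ) - 2)) *
          (k : ℝ) ^ (1 / (2 * (d : ℝ) - 2)) * ‖u k‖)
      atTop (nhds 1) ∧
    ∃ C₁ C₂ : ℝ, ∃ K : ℕ, 0 < C₁ ∧ C₁ ≤ C₂ ∧ ∀ k ≥ K,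
      C₁ * (k : ℝ) ^ (-(1 / (2 * (d : ℝ) - 2))) ≤ ‖u k‖ ∧
      ‖u k‖ ≤ C₂ * (k : ℝ) ^ (-(1 / (2 * (d : ℝ) - 2))) := by
  have hnonneg (x : Fin n → ℝ) : 0 ≤ MvPolynomial.eval x g :=
    (eq_or_ne x 0).elim (fun hx => hx ▸ hg0.ge) fun hx => (hgpos x hx).le
  exact stmt8_general (AnalyticOnNhd.eval_mvPolynomial g).contDiff hconv hg0 hnonneg hA ha hB hc₀
    (by exact_mod_cast hd) (isEquivalent_abs_rpow_of_isBigO (fun _ => hnonneg _) hc₀ hlow) hstep hne
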